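/- arXiv:2401.01365 — 7 statements merged into one kernel-verified Lean document; each statement's English description precedes it below -/
import Mathlib

section
/- Let K be a field, let f(x) in K[x] be an irreducible polynomial of degree n without repeated roots, and let K1/K be a finite Galois field extension whose degree [K1 : K] is relatively prime to n. Then f(x) remains irreducible over K1. -/
/-- Let `K` be a field, `f ∈ K[x]` an irreducible polynomial of degree `n` without repeated
roots, and `K1/K` a finite Galois field extension whose degree `[K1 : K]` is relatively prime
to `n`. Then `f` remains irreducible over `K1`. -/
theorem stmt2 {K K1 : Type*} [Field K] [Field K1] [Algebra K K1]
    [FiniteDimensional K K1] [IsGalois K K1]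
    (f : Polynomial K) (hirr : Irreducible f) (hsep : f.Separable)
    (hco : Nat.Coprime (Module.finrank K K1) f.natDegree) :
    Irreducible (f.map (algebraMap K K1)) := by
  classical
  have hf0 : f.map (algebraMap K K1) ≠ 0 :=
    (Polynomial.map_ne_zero_iff (algebraMap K K1).injective).2 hirr.ne_zero
  have hu : ¬ IsUnit (f.map (algebraMap K K1)) := by
    intro h
    have h1 := Polynomial.natDegree_eq_zero_of_isUnit h
    rw [Polynomial.natDegree_map] at h1
    exact hirr.natDegree_pos.ne' h1
  obtain ⟨g, hg, hgf⟩ := WfDvdMonoid.exists_irreducible_factor hu hf0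
  haveI : Fact (Irreducible g) := ⟨hg⟩
  let L := AdjoinRoot g
  have hfin : Module.finrank K1 L = g.natDegree :=
    (AdjoinRoot.powerBasis hg.ne_zero).finrank
  haveI : Module.Finite K1 L := (AdjoinRoot.powerBasis hg.ne_zero).finite
  haveI : Module.Finite K L := Module.Finite.trans K1 L
  have hroot : Polynomial.aeval (AdjoinRoot.root g) f = 0 := by
    rw [← Polynomial.aeval_map_algebraMap K1]
    obtain ⟨q, hq⟩ := hgf
    rw [hq, map_mul, AdjoinRoot.aeval_eq, AdjoinRoot.mk_self, zero_mul]
  have hdvd : f.natDegree ∣ Module.finrank K L := by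
    have hint : IsIntegral K (AdjoinRoot.root g : L) := IsIntegral.of_finite K _
    have h1 := minpoly.degree_dvd hint
    have h2 : Associated (minpoly K (AdjoinRoot.root g : L)) f :=
      (minpoly.irreducible hint).associated_of_dvd hirr (minpoly.dvd K _ hroot)
    rwa [Polynomial.natDegree_eq_of_degree_eq
      (Polynomial.degree_eq_degree_of_associated h2)] at h1
  rw [← Module.finrank_mul_finrank K K1 L, hfin] at hdvd
  have hd := Nat.Coprime.dvd_of_dvd_mul_left hco.symm hdvd
  have hle := Nat.le_of_dvd hg.natDegree_pos hd
  exact (Polynomial.associated_of_dvd_of_natDegree_le hgf hf0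
    (by rwa [Polynomial.natDegree_map])).irreducible hg
end

section
/- Let K be a field, let f(x) in K[x] be an irreducible polynomial of degree n without repeated roots, and let K1/K be a finite Galois field extension whose degree [K1 : K] is relatively prime to n. Then n divides the order of the Galois group Gal(f/K1) of f over K1, i.e., the degree of the splitting field of f over K1. -/
/-- Let `K` be a field, `f ∈ K[x]` an irreducible polynomial of degree `n` without repeated
roots, and `K1/K` a finite Galois field extension whose degree `[K1 : K]` is relatively prime
to `n`. Then `n` divides the order of the Galois group of `f` over `K1`, i.e. the degree of the
splitting field of `f` over `K1`. -/
theorem stmt3 {K K1 : Type*} [Field K] [Field K1] [Algebra K K1]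
    [FiniteDimensional K K1] [IsGalois K K1]
    (f : Polynomial K) (hirr : Irreducible f) (hsep : f.Separable)
    (hco : Nat.Coprime (Module.finrank K K1) f.natDegree) :
    f.natDegree ∣ Nat.card (f.map (algebraMap K K1)).Gal := by
  rw [Polynomial.Gal.card_of_separable hsep.map]
  set E := (f.map (algebraMap K K1)).SplittingField with hE
  have : FiniteDimensional K E := FiniteDimensional.trans K K1 E
  have hdeg : (((f.map (algebraMap K K1)).map (algebraMap K1 E))).degree ≠ 0 := by
    rw [Polynomial.degree_map, Polynomial.degree_map]
    exact hirr.degree_pos.ne'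
  obtain ⟨a, ha⟩ := (Polynomial.SplittingField.splits (f.map (algebraMap K K1))).exists_eval_eq_zero hdeg
  have ha' : Polynomial.aeval a f = 0 := by
    rw [Polynomial.map_map, ← IsScalarTower.algebraMap_eq K K1 E, Polynomial.eval_map_algebraMap] at ha
    exact ha
  have h1 : f.natDegree = (minpoly K a).natDegree := by
    rw [← minpoly.eq_of_irreducible hirr ha',
      Polynomial.natDegree_mul_C (inv_ne_zero (Polynomial.leadingCoeff_ne_zero.mpr hirr.ne_zero))]
  have h2 : f.natDegree ∣ Module.finrank K E := by
    rw [h1]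
    exact minpoly.degree_dvd (IsIntegral.of_finite K a)
  rw [← Module.finrank_mul_finrank K K1 E] at h2
  exact hco.symm.dvd_of_dvd_mul_left h2
end

section
/- Let ell and r be two distinct odd primes and V a nonzero finite-dimensional vector space over the rationals. Let A and B be two commuting linear automorphisms of V such that A^ell and B^r both equal the identity automorphism of V, A minus the identity is an automorphism of V, and B is not the identity. Then the dimension of V over the rationals is at least (ell - 1)(r - 1). -/
/-- Let `ℓ` and `r` be two distinct odd primes and `V` a nonzero finite-dimensional vector
space over `ℚ`. Let `A` and `B` be two commuting linear automorphisms of `V` such that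
`A^ℓ = B^r = 1`, `A - 1` is an automorphism of `V`, and `B ≠ 1`. Then
`dim_ℚ V ≥ (ℓ - 1)(r - 1)`. -/
theorem stmt5 (ell r : ℕ) (hell : ell.Prime) (hr : r.Prime) (hellodd : Odd ell)
    (hrodd : Odd r) (hne : ell ≠ r)
    {V : Type*} [AddCommGroup V] [Module ℚ V] [FiniteDimensional ℚ V] [Nontrivial V]
    (A B : V ≃ₗ[ℚ] V) (hcomm : A * B = B * A)
    (hA : A ^ ell = 1) (hB : B ^ r = 1)
    (hA1 : Function.Bijective (A.toLinearMap - (LinearMap.id : V →ₗ[ℚ] V)))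
    (hB1 : B ≠ 1) :
    (ell - 1) * (r - 1) ≤ Module.finrank ℚ V := by
  classical
  have : Fact r.Prime := ⟨hr⟩
  have hcop : Nat.gcd r ell = 1 := (Nat.coprime_primes hr hell).2 (Ne.symm hne)
  have hpos : 0 < r * ell := Nat.mul_pos hr.pos hell.pos
  -- fixed points of coprime powers
  have key : ∀ (T : V ≃ₗ[ℚ] V) (v : V), (T ^ r) v = v → (T ^ ell) v = v → T v = v := by
    intro T v h1 h2
    have h1' : Function.IsPeriodicPt T r v := by
      rw [Function.IsPeriodicPt, Function.IsFixedPt, ← LinearEquiv.pow_apply]; exact h1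
    have h2' : Function.IsPeriodicPt T ell v := by
      rw [Function.IsPeriodicPt, Function.IsFixedPt, ← LinearEquiv.pow_apply]; exact h2
    have := h1'.gcd h2'
    rw [hcop] at this
    simpa [Function.IsPeriodicPt, Function.IsFixedPt] using this
  have hcm : Commute A B := hcomm
  have hpoly : (Polynomial.X ^ (r * ell) - 1 : Polynomial ℚ) =
      Polynomial.cyclotomic (r * ell) ℚ *
        (Polynomial.cyclotomic r ℚ * (Polynomial.X ^ ell - 1)) := by
    have h1 := Polynomial.cyclotomic_expand_eq_cyclotomic_mul hell
      (n := r) (fun h => hne ((Nat.prime_dvd_prime_iff_eq hell hr).1 h)) ℚ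
    rw [← mul_assoc, ← h1]
    have h2 := congrArg (Polynomial.expand ℚ ell) (Polynomial.cyclotomic_prime_mul_X_sub_one ℚ r)
    simp only [map_mul, map_sub, map_pow, Polynomial.expand_X, map_one] at h2
    rw [h2, ← pow_mul, mul_comm]
  let C : Module.End ℚ V := ((A * B : V ≃ₗ[ℚ] V) : V →ₗ[ℚ] V)
  have hCpow : ∀ (n : ℕ) (v : V), (C ^ n) v = (A ^ n) ((B ^ n) v) := by
    intro n v
    have : (C ^ n) v = ((A * B) ^ n) v := by
      rw [Module.End.pow_apply, LinearEquiv.pow_apply]; rfl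
    rw [this, hcm.mul_pow]; rfl
  have hC1 : Polynomial.aeval C (Polynomial.X ^ (r * ell) - 1 : Polynomial ℚ) = 0 := by
    ext v
    simp only [map_sub, map_pow, Polynomial.aeval_X, map_one, LinearMap.sub_apply, hCpow]
    rw [pow_mul B, hB, one_pow, mul_comm, pow_mul A, hA, one_pow]
    simp
  have hdvd := minpoly.dvd ℚ C hC1
  have hirr := Polynomial.cyclotomic.irreducible_rat hpos
  have hint : IsIntegral ℚ C := Algebra.IsIntegral.isIntegral C
  by_cases hd : Polynomial.cyclotomic (r * ell) ℚ ∣ minpoly ℚ C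
  · have h1 := Polynomial.natDegree_le_of_dvd (hd.trans (LinearMap.minpoly_dvd_charpoly C))
      (LinearMap.charpoly_monic C).ne_zero
    rw [LinearMap.charpoly_natDegree, Polynomial.natDegree_cyclotomic,
      Nat.totient_mul hcop, Nat.totient_prime hr, Nat.totient_prime hell, mul_comm] at h1
    exact h1
  · exfalso
    have hco := (hirr.coprime_iff_not_dvd).2 hd
    rw [hpoly] at hdvd
    have h2 : minpoly ℚ C ∣ (Polynomial.X ^ r - 1) * (Polynomial.X ^ ell - 1) :=
      (hco.symm.dvd_of_dvd_mul_left hdvd).trans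
        (mul_dvd_mul_right (Polynomial.cyclotomic_prime_mul_X_sub_one ℚ r ▸ dvd_mul_right _ _) _)
    have h3 := (minpoly.dvd_iff (A := ℚ)).1 h2
    apply hB1
    ext v
    apply key B v (by rw [hB]; rfl)
    have h4 := LinearMap.congr_fun h3 v
    simp only [map_mul, map_sub, map_pow, Polynomial.aeval_X, map_one, LinearMap.sub_apply,
      Module.End.mul_apply, Module.End.one_apply, hCpow, hA, hB, LinearEquiv.coe_one, id,
      LinearMap.zero_apply] at h4
    have h5 := key A ((B ^ ell) v - v) (by
      rw [← sub_eq_zero, ← h4, map_sub]; abel) (by rw [hA]; rfl)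
    have h6 : (B ^ ell) v - v = 0 := by
      apply hA1.1
      simp only [LinearMap.sub_apply, LinearEquiv.coe_coe, LinearMap.id_apply, map_zero]
      rw [h5, sub_self]
    exact sub_eq_zero.1 h6
end

section
/- Let ell be a prime, R a finite set of cardinality n not divisible by ell, and G a group acting transitively on R. Let V be a finite-dimensional F_ell-vector space with a linear G-action admitting a filtration 0 = V_0 <= V_1 <= ... <= V_d = V by G-submodules such that G acts trivially on each successive quotient V_{i+1}/V_i (equivalently, every simple Jordan-Holder subquotient of V is a trivial G-module). Then every homomorphism of G-modules Q_R -> V is zero. -/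
open Finset

/-- The "heart" of the permutation module `F_ℓ^R`: the submodule of functions
`φ : R → F_ℓ` with `∑ a, φ a = 0`. -/
def heart (ell : ℕ) (R : Type*) [Fintype R] : Submodule (ZMod ell) (R → ZMod ell) where
  carrier := {φ | ∑ a, φ a = 0}
  add_mem' := by
    intro φ ψ hφ hψ
    simp only [Set.mem_setOf_eq, Pi.add_apply, Finset.sum_add_distrib] at *
    rw [hφ, hψ, add_zero]
  zero_mem' := by simp
  smul_mem' := by
    intro c φ hφ
    simp only [Set.mem_setOf_eq, Pi.smul_apply, smul_eq_mul, ← Finset.mul_sum] at *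
    rw [hφ, mul_zero]

/-- The natural action of `g : G` on the heart `Q_R`, given by `(g • φ) a = φ (g⁻¹ • a)`. -/
def heartSmul {ell : ℕ} {R : Type*} [Fintype R] {G : Type*} [Group G] [MulAction G R]
    (g : G) (φ : heart ell R) : heart ell R :=
  ⟨fun a => (φ : R → ZMod ell) (g⁻¹ • a), by
    have hφ : ∑ a, (φ : R → ZMod ell) a = 0 := φ.2
    show ∑ a, (φ : R → ZMod ell) (g⁻¹ • a) = 0
    rw [← hφ]
    exact Fintype.sum_equiv (MulAction.toPerm g⁻¹) _ _ (fun a => rfl)⟩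

/-- Let `ℓ` be a prime, `R` a finite set of cardinality `n` not divisible by `ℓ`, and `G` a
group acting transitively on `R`. Let `V` be a finite-dimensional `F_ℓ`-vector space with a
linear `G`-action admitting a filtration `0 = V_0 ≤ V_1 ≤ ⋯ ≤ V_d = V` by `G`-submodules such
that `G` acts trivially on each successive quotient. Then every homomorphism of `G`-modules
`Q_R → V` is zero. -/
theorem stmt9 (ell : ℕ) [hell : Fact ell.Prime] {R : Type*} [Fintype R]
    (hn : ¬ ell ∣ Fintype.card R)
    {G : Type*} [Group G] [MulAction G R] [MulAction.IsPretransitive G R]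
    {V : Type*} [AddCommGroup V] [Module (ZMod ell) V] [FiniteDimensional (ZMod ell) V]
    (ρ : Representation (ZMod ell) G V)
    (d : ℕ) (W : ℕ → Submodule (ZMod ell) V)
    (h0 : W 0 = ⊥) (hd : W d = ⊤)
    (hmono : ∀ i < d, W i ≤ W (i + 1))
    (hWinv : ∀ i ≤ d, ∀ g : G, ∀ v ∈ W i, ρ g v ∈ W i)
    (htriv : ∀ i < d, ∀ g : G, ∀ v ∈ W (i + 1), ρ g v - v ∈ W i)
    (u : heart ell R →ₗ[ZMod ell] V)
    (hequiv : ∀ (g : G) (φ : heart ell R), u (heartSmul g φ) = ρ g (u φ)) :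
    u = 0 := by
  classical
  have hn' : (Fintype.card R : ZMod ell) ≠ 0 := by
    rwa [Ne, ZMod.natCast_eq_zero_iff]
  have hne : Nonempty R := by
    by_contra h
    rw [not_nonempty_iff] at h
    exact hn (by simp [Fintype.card_eq_zero])
  obtain ⟨b⟩ := hne
  -- the projections of the delta functions to the heart
  let e : R → heart ell R := fun a =>
    ⟨fun x => (if x = a then 1 else 0) - (Fintype.card R : ZMod ell)⁻¹, by
      show ∑ x, ((if x = a then (1 : ZMod ell) else 0) - (Fintype.card R : ZMod ell)⁻¹) = 0
      rw [Finset.sum_sub_distrib]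
      simp [hn']⟩
  have he : ∀ (g : G) (a : R), heartSmul g (e a) = e (g • a) := by
    intro g a
    apply Subtype.ext
    funext x
    show (if g⁻¹ • x = a then (1 : ZMod ell) else 0) - _ = (if x = g • a then 1 else 0) - _
    simp only [inv_smul_eq_iff]
  have hsum : ∀ φ : heart ell R, φ = ∑ a, (φ : R → ZMod ell) a • (e a - e b) := by
    intro φ
    have hφ : ∑ a, (φ : R → ZMod ell) a = 0 := φ.2
    have h1 : ∑ a, (φ : R → ZMod ell) a • (e a - e b)
        = ∑ a, (φ : R → ZMod ell) a • e a := by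
      simp only [smul_sub, Finset.sum_sub_distrib, ← Finset.sum_smul, hφ, zero_smul, sub_zero]
    rw [h1]
    apply Subtype.ext
    funext x
    rw [Submodule.coe_sum, Finset.sum_apply]
    show _ = ∑ a, (φ : R → ZMod ell) a *
      ((if x = a then (1 : ZMod ell) else 0) - (Fintype.card R : ZMod ell)⁻¹)
    simp only [mul_sub, Finset.sum_sub_distrib, ← Finset.sum_mul, hφ]
    simp
  have key : ∀ k ≤ d, ∀ φ, u φ ∈ W (d - k) := by
    intro k
    induction k with
    | zero => intro _ φ; simp [hd]
    | succ k ih =>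
      intro hk φ
      have ih' := ih (by omega)
      have hkk : d - k = d - (k + 1) + 1 := by omega
      rw [hkk] at ih'
      rw [hsum φ, map_sum]
      refine Submodule.sum_mem _ fun a _ => ?_
      rw [map_smul]
      refine Submodule.smul_mem _ _ ?_
      obtain ⟨g, rfl⟩ := MulAction.exists_smul_eq G b a
      rw [map_sub, ← he, hequiv]
      exact htriv _ (by omega) g _ (ih' _)
  ext φ
  have := key d le_rfl φ
  simpa [h0] using this
end

section
/- Let ell be a prime, R a finite set of cardinality n not divisible by ell, and G a group acting transitively on R. Let V be a finite-dimensional F_ell-vector space with a linear G-action admitting a filtration by G-submodules whose successive quotients all carry the trivial G-action. Let M be a finite-dimensional F_ell-vector space with a linear G-action admitting a filtration 0 = M_0 <= M_1 <= ... <= M_d = M by G-submodules such that every successive quotient M_{i+1}/M_i is isomorphic as a G-module to the heart Q_R. Then every homomorphism of G-modules M -> V is zero. -/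
open Finset

/-- The projection of the permutation module onto the heart. -/
noncomputable def heartProj (ell : ℕ) [Fact ell.Prime] (R : Type*) [Fintype R]
    (hn : ¬ ell ∣ Fintype.card R) : (R → ZMod ell) →ₗ[ZMod ell] heart ell R where
  toFun φ := ⟨fun a => φ a - (Fintype.card R : ZMod ell)⁻¹ * ∑ b, φ b, by
    have h0 : (Fintype.card R : ZMod ell) ≠ 0 := by
      rwa [Ne, ZMod.natCast_eq_zero_iff]
    show ∑ a, (φ a - (Fintype.card R : ZMod ell)⁻¹ * ∑ b, φ b) = 0
    rw [Finset.sum_sub_distrib, Finset.sum_const, Finset.card_univ, nsmul_eq_mul,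
      mul_inv_cancel_left₀ h0, sub_self]⟩
  map_add' φ ψ := by
    ext a
    simp only [Pi.add_apply, Finset.sum_add_distrib, Submodule.coe_add]
    ring
  map_smul' c φ := by
    ext a
    simp only [Pi.smul_apply, smul_eq_mul, ← Finset.mul_sum, RingHom.id_apply,
      Submodule.coe_smul]
    ring

theorem heart_invariant_eq_zero (ell : ℕ) [Fact ell.Prime] {R : Type*} [Fintype R]
    (hn : ¬ ell ∣ Fintype.card R)
    {G : Type*} [Group G] [MulAction G R] [MulAction.IsPretransitive G R]
    {V : Type*} [AddCommGroup V] [Module (ZMod ell) V]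
    (f : heart ell R →ₗ[ZMod ell] V)
    (hf : ∀ (g : G) (φ : heart ell R), f (heartSmul g φ) = f φ) (φ : heart ell R) :
    f φ = 0 := by
  classical
  have hφ : ∑ a, (φ : R → ZMod ell) a = 0 := φ.2
  have hP : heartProj ell R hn φ = φ := by
    ext a
    simp [heartProj, hφ]
  have hc : ∀ a b : R, f (heartProj ell R hn (Pi.single a 1)) =
      f (heartProj ell R hn (Pi.single b 1)) := by
    intro a b
    obtain ⟨g, rfl⟩ := MulAction.exists_smul_eq G a b
    rw [← hf g]
    congr 1
    ext x
    simp [heartProj, heartSmul, Pi.single_apply, inv_smul_eq_iff]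
  rcases isEmpty_or_nonempty R with hR | ⟨⟨b⟩⟩
  · have : φ = 0 := by
      ext a
      exact hR.elim a
    rw [this, map_zero]
  have hs : (φ : R → ZMod ell) =
      ∑ a, (φ : R → ZMod ell) a • (Pi.single a 1 : R → ZMod ell) := by
    ext x
    simp [Finset.sum_apply, Pi.single_apply]
  rw [← hP, hs, map_sum, map_sum]
  simp only [map_smul]
  rw [Finset.sum_congr rfl (fun a _ => by rw [hc a b]), ← Finset.sum_smul, hφ, zero_smul]

/-- Let `ℓ` be a prime, `R` a finite set of cardinality `n` not divisible by `ℓ`, and `G` a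
group acting transitively on `R`. Let `V` be a finite-dimensional `F_ℓ`-vector space with a
linear `G`-action admitting a filtration by `G`-submodules with trivial successive quotients.
Let `M` be a finite-dimensional `F_ℓ`-vector space with a linear `G`-action admitting a
filtration `0 = M_0 ≤ M_1 ≤ ⋯ ≤ M_d = M` by `G`-submodules all of whose successive quotients
are isomorphic, as `G`-modules, to the heart `Q_R`. Then every homomorphism of `G`-modules
`M → V` is zero. -/
theorem stmt10 (ell : ℕ) [hell : Fact ell.Prime] {R : Type*} [Fintype R]
    (hn : ¬ ell ∣ Fintype.card R)
    {G : Type*} [Group G] [MulAction G R] [MulAction.IsPretransitive G R]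
    {V : Type*} [AddCommGroup V] [Module (ZMod ell) V] [FiniteDimensional (ZMod ell) V]
    (ρV : Representation (ZMod ell) G V)
    (dV : ℕ) (WV : ℕ → Submodule (ZMod ell) V)
    (hV0 : WV 0 = ⊥) (hVd : WV dV = ⊤)
    (hVmono : ∀ i < dV, WV i ≤ WV (i + 1))
    (hVinv : ∀ i ≤ dV, ∀ g : G, ∀ v ∈ WV i, ρV g v ∈ WV i)
    (hVtriv : ∀ i < dV, ∀ g : G, ∀ v ∈ WV (i + 1), ρV g v - v ∈ WV i)
    {M : Type*} [AddCommGroup M] [Module (ZMod ell) M] [FiniteDimensional (ZMod ell) M]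
    (ρM : Representation (ZMod ell) G M)
    (dM : ℕ) (WM : ℕ → Submodule (ZMod ell) M)
    (hM0 : WM 0 = ⊥) (hMd : WM dM = ⊤)
    (hMmono : ∀ i < dM, WM i ≤ WM (i + 1))
    (hMinv : ∀ i ≤ dM, ∀ g : G, ∀ m ∈ WM i, ρM g m ∈ WM i)
    (hquot : ∀ i, ∀ hi : i < dM,
      ∃ e : (↥(WM (i + 1)) ⧸ Submodule.comap (WM (i + 1)).subtype (WM i))
          ≃ₗ[ZMod ell] heart ell R,
        ∀ (g : G) (m : WM (i + 1)),
          e (Submodule.Quotient.mk (⟨ρM g m, hMinv (i + 1) hi g m m.2⟩ : WM (i + 1))) =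
            heartSmul g (e (Submodule.Quotient.mk m)))
    (u : M →ₗ[ZMod ell] V)
    (hequiv : ∀ (g : G) (m : M), u (ρM g m) = ρV g (u m)) :
    u = 0 := by
  have key : ∀ k, k ≤ dV → ∀ m, u m ∈ WV (dV - k) := by
    intro k
    induction k with
    | zero => intro _ m; simp [hVd]
    | succ k ih =>
      intro hk
      have ih := ih (by omega)
      obtain ⟨i, hi⟩ : ∃ i, i = dV - (k + 1) := ⟨_, rfl⟩
      have hi1 : dV - k = i + 1 := by omega
      have hid : i < dV := by omega
      rw [hi1] at ih
      rw [← hi]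
      have step : ∀ j, j ≤ dM → ∀ m ∈ WM j, u m ∈ WV i := by
        intro j
        induction j with
        | zero =>
          intro _ m hm
          rw [hM0, Submodule.mem_bot] at hm
          simp [hm]
        | succ j jh =>
          intro hj m hm
          have jh := jh (by omega)
          obtain ⟨e, he⟩ := hquot j hj
          let h : WM (j + 1) →ₗ[ZMod ell] (V ⧸ WV i) :=
            (WV i).mkQ ∘ₗ u ∘ₗ (WM (j + 1)).subtype
          have hker : Submodule.comap (WM (j + 1)).subtype (WM j) ≤ LinearMap.ker h := by
            intro x hx
            rw [LinearMap.mem_ker]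
            exact (Submodule.Quotient.mk_eq_zero _).2 (jh _ hx)
          let f : heart ell R →ₗ[ZMod ell] (V ⧸ WV i) :=
            (Submodule.liftQ _ h hker) ∘ₗ e.symm.toLinearMap
          have hfe : ∀ x : WM (j + 1), f (e (Submodule.Quotient.mk x)) =
              Submodule.Quotient.mk (u x) := by
            intro x
            show Submodule.liftQ _ h hker (e.symm (e (Submodule.Quotient.mk x))) = _
            rw [e.symm_apply_apply]
            rfl
          have hf : ∀ (g : G) (φ : heart ell R), f (heartSmul g φ) = f φ := by
            intro g φ
            obtain ⟨q, rfl⟩ := e.surjective φ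
            obtain ⟨x, rfl⟩ := Submodule.Quotient.mk_surjective _ q
            rw [← he, hfe, hfe, Submodule.Quotient.eq]
            show u (ρM g x) - u x ∈ WV i
            rw [hequiv]
            exact hVtriv i hid g _ (ih _)
          have h0 := heart_invariant_eq_zero ell hn f hf (e (Submodule.Quotient.mk ⟨m, hm⟩))
          rw [hfe] at h0
          exact (Submodule.Quotient.mk_eq_zero _).1 h0
      intro m
      exact step dM le_rfl m (by rw [hMd]; trivial)
  ext m
  have := key dV le_rfl m
  rw [Nat.sub_self, hV0, Submodule.mem_bot] at this
  simpa using this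
end

section
/- Let ell be an odd prime and n >= 3 an odd integer. Then the polynomial x^n - 2 is irreducible over the ell-th cyclotomic field Q(zeta_ell). -/
open Polynomial

theorem two_ne_pow_aux (m : ℕ) [NeZero m] (K : Type*) [Field K] [NumberField K]
    [IsCyclotomicExtension {m} ℚ K] (hodd : Odd m) (q : ℕ) (hq : 2 ≤ q)
    (b : K) : b ^ q ≠ 2 := by
  intro hb
  have hbi : IsIntegral ℤ b := by
    apply IsIntegral.of_pow (n := q) (by omega)
    rw [hb]
    have h2 := isIntegral_algebraMap (R := ℤ) (A := K) (x := 2)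
    rwa [map_ofNat] at h2
  obtain ⟨c, hc⟩ : ∃ c : NumberField.RingOfIntegers K,
      (c : K) = b := ⟨⟨b, hbi⟩, rfl⟩
  have hc2 : c ^ q = 2 := by
    apply NumberField.RingOfIntegers.ext
    have h1 : algebraMap (NumberField.RingOfIntegers K) K (c ^ q)
        = algebraMap (NumberField.RingOfIntegers K) K 2 := by
      rw [map_pow, map_ofNat, ← hb, ← hc]
    exact h1
  have : Fact (Nat.Prime 2) := ⟨Nat.prime_two⟩
  set p2 : Ideal ℤ := Ideal.span {((2 : ℕ) : ℤ)} with hp2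
  have hprime : p2.IsPrime := by
    rw [hp2, Ideal.span_singleton_prime (by norm_num)]
    exact Nat.prime_iff_prime_int.mp Nat.prime_two
  have hmax : p2.IsMaximal := hprime.isMaximal (by simp [hp2])
  obtain ⟨⟨P, hP1, hP2⟩⟩ := p2.nonempty_primesOver
    (S := NumberField.RingOfIntegers K)
  have hP1 : P.IsPrime := hP1
  have hP2 : P.LiesOver p2 := hP2
  have hr := IsCyclotomicExtension.Rat.ramificationIdx_eq_of_not_dvd 2 (m := m)
    K P (by rw [← even_iff_two_dvd]; exact Nat.not_even_iff_odd.mpr hodd)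
  have hmap : p2.map (algebraMap ℤ (NumberField.RingOfIntegers K))
      = Ideal.span {2} := by
    simp [hp2, Ideal.map_span]
  rw [Ideal.IsDedekindDomain.ramificationIdx_eq_multiplicity p2 P (by rw [hmap]; simp), hmap] at hr
  have h2P : (2 : NumberField.RingOfIntegers K) ∈ P := by
    have : Ideal.span {2} ≤ P := by
      rw [← hmap, Ideal.map_le_iff_le_comap]
      exact (Ideal.over_def P p2).le
    exact this (Ideal.mem_span_singleton_self _)
  have hcP : c ∈ P := hP1.mem_of_pow_mem q (hc2 ▸ h2P)
  have hdvd : P ^ 2 ∣ Ideal.span {2} := by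
    rw [Ideal.dvd_span_singleton, ← hc2]
    exact Ideal.pow_le_pow_right hq (Ideal.pow_mem_pow hcP q)
  have hfin : FiniteMultiplicity P (Ideal.span {2}) := by
    apply FiniteMultiplicity.of_not_isUnit
    · rw [Ideal.isUnit_iff]; exact hP1.ne_top
    · simp
  have := hfin.le_multiplicity_of_pow_dvd hdvd
  omega

/-- Let `ℓ` be an odd prime and `n ≥ 3` an odd integer. Then the polynomial `x^n - 2` is
irreducible over the `ℓ`-th cyclotomic field `ℚ(ζ_ℓ)`. -/
theorem stmt15 (p : ℕ+) (hp : (p : ℕ).Prime) (hodd : Odd (p : ℕ))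
    (n : ℕ) (hn : 3 ≤ n) (hnodd : Odd n) :
    Irreducible ((X : Polynomial (CyclotomicField p ℚ)) ^ n - C 2) := by
  apply X_pow_sub_C_irreducible_of_odd hnodd
  intro q hq _ b
  have : NeZero (((p : ℕ) : ℕ) : ℚ) := ⟨by exact_mod_cast p.ne_zero⟩
  have hcyc : @IsCyclotomicExtension {(p : ℕ)} ℚ (CyclotomicField p ℚ) _ _
      DivisionRing.toRatAlgebra := by
    have e : (DivisionRing.toRatAlgebra : Algebra ℚ (CyclotomicField p ℚ))
        = CyclotomicField.algebra (p : ℕ) ℚ := Subsingleton.elim _ _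
    rw [e]
    exact CyclotomicField.isCyclotomicExtension (p : ℕ) ℚ
  exact two_ne_pow_aux p _ hodd q hq.two_le b
end

section
/- Let n >= 5 be an integer and f(x) a polynomial of degree n with rational coefficients and without repeated roots whose Galois group over Q is isomorphic to the symmetric group S_n. Let K be a finite abelian Galois extension of Q. Then the Galois group of f over K (i.e., the Galois group of the splitting field of f over K) is isomorphic to either S_n or the alternating group A_n; in particular, f remains irreducible over K. -/
open Polynomial commutatorElement in
/-- The image of the Galois group over `K` contains the alternating group. -/
theorem aux_range {F K Ω : Type*} [Field F] [Field K] [Field Ω] [Algebra F K] [Algebra F Ω]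
    [Algebra K Ω] [IsScalarTower F K Ω] [Normal F K] [Normal F Ω] [Normal K Ω] [IsAlgClosed Ω]
    (habelian : ∀ σ τ : K ≃ₐ[F] K, σ * τ = τ * σ)
    (f : F[X]) (n : ℕ) (hn : 5 ≤ n) (hdeg : f.natDegree = n) (hsep : f.Separable)
    (hcard : Nat.card f.Gal = n.factorial)
    [Fact (((f.map (algebraMap F K)).map (algebraMap K Ω)).Splits)]
    [Fintype ((f.map (algebraMap F K)).rootSet Ω)]
    [DecidableEq ((f.map (algebraMap F K)).rootSet Ω)]
    (hR : Nat.card ((f.map (algebraMap F K)).rootSet Ω) = n) :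
    alternatingGroup ((f.map (algebraMap F K)).rootSet Ω) ≤
      (Gal.galActionHom (f.map (algebraMap F K)) Ω).range := by
  have hroot : (f.map (algebraMap F K)).rootSet Ω = f.rootSet Ω := by
    simp only [rootSet, aroots, map_map, ← IsScalarTower.algebraMap_eq]
  have : Fact ((f.map (algebraMap F Ω)).Splits) := ⟨IsAlgClosed.splits _⟩
  have hbij : Function.Bijective (Gal.galActionHom f Ω) := by
    rw [Nat.bijective_iff_injective_and_card]
    refine ⟨Gal.galActionHom_injective f Ω, ?_⟩
    rw [hcard, Nat.card_perm, ← hroot, hR]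
  have lift : ∀ s : Equiv.Perm ((f.map (algebraMap F K)).rootSet Ω),
      ∃ σ : Ω ≃ₐ[F] Ω, ∀ x : (f.map (algebraMap F K)).rootSet Ω, σ (x : Ω) = s x := by
    intro s
    obtain ⟨g, hg⟩ := hbij.2 ((Equiv.setCongr hroot).permCongr s)
    obtain ⟨σ, rfl⟩ := Gal.restrict_surjective f Ω g
    refine ⟨σ, fun x => ?_⟩
    have := Gal.galActionHom_restrict f Ω σ (Equiv.setCongr hroot x)
    rw [hg] at this
    simpa using this.symm
  rw [← alternatingGroup.commutator_perm_eq (by rw [hR]; exact hn), commutator_def,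
    Subgroup.commutator_le]
  intro s _ t _
  obtain ⟨σ, hσ⟩ := lift s
  obtain ⟨τ, hτ⟩ := lift t
  have hfix : ∀ k : K, (⁅σ, τ⁆ : Ω ≃ₐ[F] Ω) (algebraMap K Ω k) = algebraMap K Ω k := by
    intro k
    rw [← AlgEquiv.restrictNormal_commutes]
    congr 1
    change AlgEquiv.restrictNormalHom K ⁅σ, τ⁆ k = k
    rw [map_commutatorElement, commutatorElement_eq_one_iff_mul_comm.2 (habelian _ _)]
    rfl
  let ρ : Ω ≃ₐ[K] Ω := { (⁅σ, τ⁆ : Ω ≃ₐ[F] Ω) with commutes' := hfix }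
  have hinv : ∀ (s : Equiv.Perm ((f.map (algebraMap F K)).rootSet Ω)) (σ : Ω ≃ₐ[F] Ω),
      (∀ x : (f.map (algebraMap F K)).rootSet Ω, σ (x : Ω) = s x) → ∀ x : (f.map (algebraMap F K)).rootSet Ω, σ⁻¹ (x : Ω) = s⁻¹ x := by
    intro s σ h x
    change σ.symm _ = _
    rw [AlgEquiv.symm_apply_eq, h]
    simp
  refine ⟨Gal.restrict _ Ω ρ, ?_⟩
  ext x
  rw [Gal.galActionHom_restrict]
  change (⁅σ, τ⁆ : Ω ≃ₐ[F] Ω) x = _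
  simp only [commutatorElement_def, AlgEquiv.mul_apply, Equiv.Perm.mul_apply]
  rw [hinv t τ hτ, hinv s σ hσ, hτ, hσ]

open Polynomial commutatorElement in
theorem aux_irred {K Ω : Type*} [Field K] [Field Ω] [Algebra K Ω] [Normal K Ω] [IsAlgClosed Ω]
    (p : K[X]) (hsep : p.Separable) (hdeg : p.natDegree ≠ 0)
    (htrans : ∀ x y : p.rootSet Ω, ∃ σ : Ω ≃ₐ[K] Ω, σ (x : Ω) = y) : Irreducible p := by
  have hp0 : p ≠ 0 := hsep.ne_zero
  refine ⟨fun h => hdeg (natDegree_eq_zero_of_isUnit h), ?_⟩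
  intro a b hab
  by_contra! hcon
  have ha0 : a ≠ 0 := by rintro rfl; simp [hab] at hp0
  have hb0 : b ≠ 0 := by rintro rfl; simp [hab] at hp0
  have hroot : ∀ q : K[X], q ≠ 0 → ¬ IsUnit q → ∃ x : Ω, aeval x q = 0 := by
    intro q hq hu
    exact IsAlgClosed.exists_aeval_eq_zero _ _ (fun h => hu (isUnit_iff_degree_eq_zero.2 h))
  obtain ⟨x, hx⟩ := hroot a ha0 hcon.1
  obtain ⟨y, hy⟩ := hroot b hb0 hcon.2
  obtain ⟨σ, hσ⟩ := htrans ⟨x, by rw [mem_rootSet]; exact ⟨hp0, by simp [hab, hx]⟩⟩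
    ⟨y, by rw [mem_rootSet]; exact ⟨hp0, by simp [hab, hy]⟩⟩
  have hya : aeval y a = 0 := by
    have : aeval (σ x) a = σ (aeval x a) := aeval_algHom_apply σ.toAlgHom x a
    simp only at hσ
    rw [← hσ, this, hx, map_zero]
  rw [hab] at hsep
  obtain ⟨u, v, huv⟩ := hsep.isCoprime
  have := congrArg (aeval y) huv
  simp [hya, hy] at this

open Polynomial commutatorElement in
theorem aux_main {F K Ω : Type*} [Field F] [Field K] [Field Ω] [Algebra F K] [Algebra F Ω]
    [Algebra K Ω] [IsScalarTower F K Ω] [Normal F K] [Normal F Ω] [Normal K Ω] [IsAlgClosed Ω]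
    (habelian : ∀ σ τ : K ≃ₐ[F] K, σ * τ = τ * σ)
    (f : F[X]) (n : ℕ) (hn : 5 ≤ n) (hdeg : f.natDegree = n) (hsep : f.Separable)
    (hcard : Nat.card f.Gal = n.factorial) :
    (Nonempty ((f.map (algebraMap F K)).Gal ≃* Equiv.Perm (Fin n)) ∨
        Nonempty ((f.map (algebraMap F K)).Gal ≃* alternatingGroup (Fin n))) ∧
      Irreducible (f.map (algebraMap F K)) := by
  classical
  have : Fact (((f.map (algebraMap F K)).map (algebraMap K Ω)).Splits) :=
    ⟨IsAlgClosed.splits _⟩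
  have hsepK : (f.map (algebraMap F K)).Separable := hsep.map
  have hR : Nat.card ((f.map (algebraMap F K)).rootSet Ω) = n := by
    rw [Nat.card_eq_fintype_card, card_rootSet_eq_natDegree hsepK (IsAlgClosed.splits _),
      natDegree_map, hdeg]
  have hle := aux_range (Ω := Ω) habelian f n hn hdeg hsep hcard hR
  have hinj := Gal.galActionHom_injective (f.map (algebraMap F K)) Ω
  have e1 := MonoidHom.ofInjective hinj
  let e : (f.map (algebraMap F K)).rootSet Ω ≃ Fin n := Finite.equivFinOfCardEq hR
  have : Nontrivial ((f.map (algebraMap F K)).rootSet Ω) := by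
    rw [← Finite.one_lt_card_iff_nontrivial, hR]; omega
  constructor
  · by_cases hA : (Gal.galActionHom (f.map (algebraMap F K)) Ω).range =
        alternatingGroup ((f.map (algebraMap F K)).rootSet Ω)
    · right
      exact ⟨e1.trans ((MulEquiv.subgroupCongr hA).trans e.altCongrHom)⟩
    · left
      have htop : (Gal.galActionHom (f.map (algebraMap F K)) Ω).range = ⊤ := by
        have h2 := alternatingGroup.index_eq_two
          (α := ((f.map (algebraMap F K)).rootSet Ω))
        have hdvd := Subgroup.index_dvd_of_le hle
        rw [h2] at hdvd
        rcases (Nat.dvd_prime Nat.prime_two).1 hdvd with h | h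
        · exact Subgroup.index_eq_one.1 h
        · exact absurd (Equiv.Perm.eq_alternatingGroup_of_index_eq_two h) hA
      exact ⟨e1.trans ((MulEquiv.subgroupCongr htop).trans
        (Subgroup.topEquiv.trans e.permCongrHom))⟩
  · refine aux_irred (Ω := Ω) _ hsepK (by rw [natDegree_map]; omega) ?_
    intro x y
    have := alternatingGroup.isPretransitive_of_three_le_card
      ((f.map (algebraMap F K)).rootSet Ω) (by rw [hR]; omega)
    obtain ⟨g, hg⟩ := MulAction.exists_smul_eq (alternatingGroup ((f.map (algebraMap F K)).rootSet Ω)) x y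
    obtain ⟨h, hh⟩ := hle g.2
    obtain ⟨σ, rfl⟩ := Gal.restrict_surjective _ Ω h
    refine ⟨σ, ?_⟩
    rw [← Gal.galActionHom_restrict, hh, ← hg]
    rfl


/-- Let `n ≥ 5` and let `f ∈ ℚ[x]` be a degree-`n` polynomial without repeated roots whose
Galois group over `ℚ` is isomorphic to the symmetric group `S_n`. Let `K` be a finite abelian
Galois extension of `ℚ`. Then the Galois group of `f` over `K` (the Galois group of the
splitting field of `f` over `K`) is isomorphic to `S_n` or to the alternating group `A_n`;
in particular, `f` remains irreducible over `K`. -/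
theorem stmt16 (n : ℕ) (hn : 5 ≤ n) (f : Polynomial ℚ) (hdeg : f.natDegree = n)
    (hsep : f.Separable) (hgal : Nonempty (f.Gal ≃* Equiv.Perm (Fin n)))
    (K : Type*) [Field K] [Algebra ℚ K] [FiniteDimensional ℚ K] [IsGalois ℚ K]
    (habelian : ∀ σ τ : K ≃ₐ[ℚ] K, σ * τ = τ * σ) :
    (Nonempty ((f.map (algebraMap ℚ K)).Gal ≃* Equiv.Perm (Fin n)) ∨
        Nonempty ((f.map (algebraMap ℚ K)).Gal ≃* alternatingGroup (Fin n))) ∧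
      Irreducible (f.map (algebraMap ℚ K)) := by

  have hcard : Nat.card f.Gal = n.factorial := by
    obtain ⟨e⟩ := hgal
    rw [Nat.card_congr e.toEquiv, Nat.card_perm, Nat.card_fin]
  have : Algebra.IsAlgebraic ℚ (AlgebraicClosure K) := Algebra.IsAlgebraic.trans ℚ K _
  have : IsAlgClosure ℚ (AlgebraicClosure K) := ⟨inferInstance, inferInstance⟩
  have : Normal ℚ (AlgebraicClosure K) := IsAlgClosure.normal _ _
  exact aux_main (Ω := AlgebraicClosure K) habelian f n hn hdeg hsep hcard
end
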